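/- arXiv:2504.06506 — 3 statements merged into one kernel-verified Lean document; each statement's English description precedes it below -/
import Mathlib

section
/- Let S be a densely defined, closed, symmetric operator in a complex Hilbert space H, let m ∈ ℕ, m ≥ 1, and assume S^m is densely defined. Let P(t) = a_m t^m + a_{m−1} t^{m−1} + … + a_1 t + a_0 be a polynomial with real coefficients and a_m > 0, and define the operator P(S) on dom(P(S)) = dom(S^m) by P(S)f = a_m S^m f + a_{m−1} S^{m−1} f + … + a_1 S f + a_0 f. Then the deficiency indices of P(S) coincide with those of S^m: n₊(P(S)) = n₊(S^m) and n₋(P(S)) = n₋(S^m), as cardinals. -/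
open scoped InnerProductSpace
open Cardinal

noncomputable section

variable {E F G H : Type*}
  [NormedAddCommGroup E] [InnerProductSpace ℂ E] [CompleteSpace E]
  [NormedAddCommGroup F] [InnerProductSpace ℂ F] [CompleteSpace F]
  [NormedAddCommGroup G] [InnerProductSpace ℂ G] [CompleteSpace G]
  [NormedAddCommGroup H] [InnerProductSpace ℂ H] [CompleteSpace H]

/-- The product (composition) `T₂T₁` of two partially defined linear operators, with domain
`dom(T₂T₁) = {f ∈ dom T₁ | T₁ f ∈ dom T₂}` and value `(T₂T₁) f = T₂ (T₁ f)`. -/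
def pcomp {E F G : Type*}
    [NormedAddCommGroup E] [InnerProductSpace ℂ E]
    [NormedAddCommGroup F] [InnerProductSpace ℂ F]
    [NormedAddCommGroup G] [InnerProductSpace ℂ G]
    (T₂ : F →ₗ.[ℂ] G) (T₁ : E →ₗ.[ℂ] F) : E →ₗ.[ℂ] G where
  domain := (T₂.domain.comap T₁.toFun).map T₁.domain.subtype
  toFun := T₂.toFun ∘ₗ
    (T₁.toFun.restrict (p := T₂.domain.comap T₁.toFun) (q := T₂.domain) fun _ hx => hx) ∘ₗ
    (Submodule.equivMapOfInjective T₁.domain.subtype (Submodule.injective_subtype _)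
      (T₂.domain.comap T₁.toFun)).symm.toLinearMap

/-- The identity as a partially defined operator (domain all of `X`). -/
def pid (X : Type*) [NormedAddCommGroup X] [InnerProductSpace ℂ X] : X →ₗ.[ℂ] X :=
  ⟨⊤, (⊤ : Submodule ℂ X).subtype⟩

/-- Powers of a partially defined operator: `S⁰ = I`, `S¹ = S`, and recursively
`dom(S^m) = {f ∈ dom(S^{m-1}) | S^{m-1} f ∈ dom S}`, `S^m f = S (S^{m-1} f)`. -/
def pmapPow {X : Type*} [NormedAddCommGroup X] [InnerProductSpace ℂ X]
    (S : X →ₗ.[ℂ] X) : ℕ → X →ₗ.[ℂ] X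
  | 0 => pid X
  | 1 => S
  | (n + 2) => pcomp S (pmapPow S (n + 1))

/-- The kernel of `A - μ·I` as a submodule of the domain of `A`. -/
def kerAt {X : Type*} [NormedAddCommGroup X] [InnerProductSpace ℂ X]
    (A : X →ₗ.[ℂ] X) (μ : ℂ) : Submodule ℂ A.domain :=
  LinearMap.ker (A.toFun - μ • A.domain.subtype)

/-- Deficiency index `n₊(S) = dim ker(S* - i·I)`, a Hilbert-space dimension as a cardinal. -/
def nPlus (S : H →ₗ.[ℂ] H) : Cardinal := Module.rank ℂ (kerAt S.adjoint Complex.I)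

/-- Deficiency index `n₋(S) = dim ker(S* + i·I)`, a Hilbert-space dimension as a cardinal. -/
def nMinus (S : H →ₗ.[ℂ] H) : Cardinal := Module.rank ℂ (kerAt S.adjoint (-Complex.I))

/-- The symmetry condition `⟪Sf, g⟫ = ⟪f, Sg⟫` for all `f, g` in the domain of `S`. -/
def IsSymmP {X : Type*} [NormedAddCommGroup X] [InnerProductSpace ℂ X]
    (S : X →ₗ.[ℂ] X) : Prop :=
  ∀ f g : S.domain, ⟪S f, (g : X)⟫_ℂ = ⟪(f : X), S g⟫_ℂ

/-- The defect number of `T` at `0`: `def(T,0) = dim ker(T*)`, as a cardinal. -/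
def defect0 (T : E →ₗ.[ℂ] F) : Cardinal := Module.rank ℂ (LinearMap.ker T.adjoint.toFun)

/-- `0` belongs to the field of regularity of `T`: there is `c > 0` with
`‖T f‖ ≥ c ‖f‖` for all `f ∈ dom T`. -/
def ZeroRegular {X Y : Type*} [NormedAddCommGroup X] [InnerProductSpace ℂ X]
    [NormedAddCommGroup Y] [InnerProductSpace ℂ Y] (T : X →ₗ.[ℂ] Y) : Prop :=
  ∃ c : ℝ, 0 < c ∧ ∀ f : T.domain, c * ‖(f : X)‖ ≤ ‖T f‖

/-- `T` is Fredholm: densely defined, closed, with closed range, and finite-dimensional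
kernel and cokernel (= kernel of the adjoint). -/
def IsFredholmP (T : E →ₗ.[ℂ] F) : Prop :=
  Dense (T.domain : Set E) ∧ T.IsClosed ∧
    IsClosed ((LinearMap.range T.toFun : Submodule ℂ F) : Set F) ∧
    Module.rank ℂ (LinearMap.ker T.toFun) < ℵ₀ ∧
    Module.rank ℂ (LinearMap.ker T.adjoint.toFun) < ℵ₀

/-- `T` is left semi-Fredholm: densely defined, closed, with closed range and
finite-dimensional kernel. -/
def IsLeftSemiFredholmP (T : E →ₗ.[ℂ] F) : Prop :=
  Dense (T.domain : Set E) ∧ T.IsClosed ∧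
    IsClosed ((LinearMap.range T.toFun : Submodule ℂ F) : Set F) ∧
    Module.rank ℂ (LinearMap.ker T.toFun) < ℵ₀

/-- The (semi-)Fredholm index `ind(T) = dim ker T - dim ker T*` (as an integer,
via `finrank`). -/
def indP (T : E →ₗ.[ℂ] F) : ℤ :=
  (Module.finrank ℂ (LinearMap.ker T.toFun) : ℤ) -
    (Module.finrank ℂ (LinearMap.ker T.adjoint.toFun) : ℤ)

/-! The orbit `u j = S ^ j f` of a symmetric operator satisfies `‖u (j+1)‖² ≤ ‖u j‖ ‖u (j+2)‖`, so
the lower powers are bounded by `S ^ m` with arbitrarily small relative bound, up to a multiple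
of `‖f‖`. For `μ` off the real axis, symmetry also gives `|Im μ| ‖f‖ ≤ ‖(Q(S) - μ) f‖` for every
real polynomial `Q`. Hence along the segment from `S ^ m` to `P(S)`, whose leading coefficients
stay bounded away from `0`, the difference `P(S) - S ^ m` is bounded relative to `Q(S) - μ`,
uniformly in the point `Q` of the segment. The deficiency space of `Q(S)` at `μ̄` is the orthogonal
complement of the range of `Q(S) - μ`; for nearby points of the segment these complements are so
close that orthogonal projection is an isomorphism between them, and connectedness of the segment
links its two ends. -/

section Orbits

variable {X Y Z : Type*} [NormedAddCommGroup X] [InnerProductSpace ℂ X]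
  [NormedAddCommGroup Y] [InnerProductSpace ℂ Y] [NormedAddCommGroup Z] [InnerProductSpace ℂ Z]

theorem exists_mem_graph_of_mem_graph_pcomp {T₂ : Y →ₗ.[ℂ] Z} {T₁ : X →ₗ.[ℂ] Y} {x : X} {z : Z}
    (h : (x, z) ∈ (pcomp T₂ T₁).graph) : ∃ y, (x, y) ∈ T₁.graph ∧ (y, z) ∈ T₂.graph := by
  obtain ⟨⟨_, x, hTx, rfl⟩, rfl, rfl⟩ := (LinearPMap.mem_graph_iff _).1 h
  have hx : (x : X) ∈ (pcomp T₂ T₁).domain := ⟨x, hTx, rfl⟩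
  have hpreimage : (Submodule.equivMapOfInjective T₁.domain.subtype
      (Submodule.injective_subtype _) (T₂.domain.comap T₁.toFun)).symm ⟨x, hx⟩ = ⟨x, hTx⟩ := by
    rw [LinearEquiv.symm_apply_eq]
    rfl
  have hvalue : pcomp T₂ T₁ ⟨x, hx⟩ = T₂ ⟨T₁ x, hTx⟩ :=
    congrArg (fun w : T₂.domain.comap T₁.toFun => T₂ ⟨T₁ w, w.2⟩) hpreimage
  exact ⟨T₁ x, T₁.mem_graph x, hvalue ▸ T₂.mem_graph ⟨T₁ x, hTx⟩⟩

variable {S : X →ₗ.[ℂ] X} {m : ℕ}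

theorem exists_mem_graph_of_mem_graph_pmapPow_succ {x z : X}
    (h : (x, z) ∈ (pmapPow S (m + 1)).graph) :
    ∃ y, (x, y) ∈ (pmapPow S m).graph ∧ (y, z) ∈ S.graph := by
  cases m with
  | zero => exact ⟨x, (pid X).mem_graph ⟨x, trivial⟩, h⟩
  | succ m => exact exists_mem_graph_of_mem_graph_pcomp h

theorem antitone_domain_pmapPow (S : X →ₗ.[ℂ] X) : Antitone fun m => (pmapPow S m).domain :=
  antitone_nat_of_succ_le fun m x hx => by
    obtain ⟨z, hz⟩ := LinearPMap.mem_domain_iff.1 hx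
    obtain ⟨y, hy, -⟩ := exists_mem_graph_of_mem_graph_pmapPow_succ hz
    exact LinearPMap.mem_domain_of_mem_graph hy

/-- `IsOrbit S m u` says that `u 0, …, u m` is a finite orbit of the partial operator `S`, that is
`u j ∈ dom S` and `u (j + 1) = S (u j)` for `j < m`; the terms `u j` with `j > m` are arbitrary. -/
def IsOrbit (S : X →ₗ.[ℂ] X) (m : ℕ) (u : ℕ → X) : Prop :=
  ∀ j < m, (u j, u (j + 1)) ∈ S.graph

open Classical in
/-- The sequence `f, S f, S² f, …`, continued by the junk value `0` as soon as `S^j f` is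
undefined. -/
def powOrbit (S : X →ₗ.[ℂ] X) (f : X) (j : ℕ) : X :=
  if hf : f ∈ (pmapPow S j).domain then pmapPow S j ⟨f, hf⟩ else 0

theorem powOrbit_of_mem {f : X} (hf : f ∈ (pmapPow S m).domain) :
    powOrbit S f m = pmapPow S m ⟨f, hf⟩ :=
  dif_pos hf

theorem powOrbit_zero (S : X →ₗ.[ℂ] X) (f : X) : powOrbit S f 0 = f :=
  powOrbit_of_mem (S := S) (m := 0) trivial

theorem mem_graph_powOrbit {f : X} (hf : f ∈ (pmapPow S m).domain) :
    (f, powOrbit S f m) ∈ (pmapPow S m).graph := by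
  rw [powOrbit_of_mem hf]
  exact (pmapPow S m).mem_graph ⟨f, hf⟩

theorem isOrbit_powOrbit {f : X} (hf : f ∈ (pmapPow S m).domain) :
    IsOrbit S m (powOrbit S f) := fun j hj => by
  have hmem {k : ℕ} (hk : k ≤ m) : (f, powOrbit S f k) ∈ (pmapPow S k).graph :=
    mem_graph_powOrbit (antitone_domain_pmapPow S hk hf)
  obtain ⟨y, hy, hS⟩ := exists_mem_graph_of_mem_graph_pmapPow_succ (hmem hj)
  rwa [LinearPMap.mem_graph_snd_inj (pmapPow S j) hy (hmem hj.le) rfl] at hS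

theorem IsSymmP.inner_eq_of_mem_graph (hS : IsSymmP S) {x x' y y' : X}
    (hx : (x, x') ∈ S.graph) (hy : (y, y') ∈ S.graph) : ⟪x', y⟫_ℂ = ⟪x, y'⟫_ℂ := by
  obtain ⟨f, rfl, rfl⟩ := (LinearPMap.mem_graph_iff _).1 hx
  obtain ⟨g, rfl, rfl⟩ := (LinearPMap.mem_graph_iff _).1 hy
  exact hS f g

variable {u : ℕ → X}

theorem IsOrbit.inner_eq (hu : IsOrbit S m u) (hS : IsSymmP S) {k l : ℕ} (hkl : k + l ≤ m) :
    ⟪u k, u l⟫_ℂ = ⟪u 0, u (k + l)⟫_ℂ := by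
  induction k generalizing l with
  | zero => rw [zero_add]
  | succ k ih =>
    rw [hS.inner_eq_of_mem_graph (hu k (by lia)) (hu l (by lia)), ih (by lia),
      Nat.add_right_comm, Nat.add_assoc]

theorem IsOrbit.im_inner_eq_zero (hu : IsOrbit S m u) (hS : IsSymmP S) {j : ℕ} (hj : j ≤ m) :
    (⟪u 0, u j⟫_ℂ).im = 0 := by
  rw [← Complex.conj_eq_iff_im, inner_conj_symm]
  exact hu.inner_eq hS (l := 0) hj

theorem IsOrbit.im_inner_sum_eq_zero (hu : IsOrbit S m u) (hS : IsSymmP S) (b : ℕ → ℝ) :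
    (⟪u 0, ∑ j ∈ Finset.range (m + 1), (b j : ℂ) • u j⟫_ℂ).im = 0 := by
  rw [inner_sum, Complex.im_sum]
  refine Finset.sum_eq_zero fun j hj => ?_
  rw [inner_smul_right, Complex.im_ofReal_mul,
    hu.im_inner_eq_zero hS (Finset.mem_range_succ_iff.1 hj), mul_zero]

theorem IsOrbit.norm_sq_le (hu : IsOrbit S m u) (hS : IsSymmP S) {j : ℕ} (hj : j + 2 ≤ m) :
    ‖u (j + 1)‖ ^ 2 ≤ ‖u j‖ * ‖u (j + 2)‖ := by
  have hinner : ⟪u (j + 1), u (j + 1)⟫_ℂ = ⟪u j, u (j + 2)⟫_ℂ :=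
    hS.inner_eq_of_mem_graph (hu j (by lia)) (hu (j + 1) (by lia))
  calc ‖u (j + 1)‖ ^ 2 = ‖⟪u (j + 1), u (j + 1)⟫_ℂ‖ := by simp
    _ = ‖⟪u j, u (j + 2)⟫_ℂ‖ := by rw [hinner]
    _ ≤ ‖u j‖ * ‖u (j + 2)‖ := norm_inner_le_norm _ _

end Orbits

section Interpolation

variable {R : Type*} [Field R] [LinearOrder R] [IsStrictOrderedRing R] {x : ℕ → R} {m : ℕ}

theorem le_max_of_two_mul_le_add
    (hconvex : ∀ j, j + 2 ≤ m → 2 * x (j + 1) ≤ x j + x (j + 2)) {j : ℕ} (hj : j ≤ m) :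
    x j ≤ max (x 0) (x m) := by
  induction m generalizing j with
  | zero => simp [Nat.le_zero.1 hj]
  | succ m ih =>
    replace ih {i : ℕ} (hi : i ≤ m) := ih (fun k hk => hconvex k (by lia)) hi
    have hpenultimate : x m ≤ max (x 0) (x (m + 1)) := by
      cases m with
      | zero => exact le_max_left _ _
      | succ n =>
        by_contra! hlt
        obtain ⟨h0, hlast⟩ := max_lt_iff.1 hlt
        have hprev : x n ≤ x (n + 1) := (ih n.le_succ).trans (max_le h0.le le_rfl)
        linarith [hconvex n le_rfl]
    rcases Nat.le_succ_iff.1 hj with hj | rfl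
    · exact (ih hj).trans (max_le (le_max_left _ _) hpenultimate)
    · exact le_max_right _ _

theorem pow_mul_le_add_of_sq_le_mul (hx : ∀ j, 0 ≤ x j)
    (hlog : ∀ j, j + 2 ≤ m → x (j + 1) ^ 2 ≤ x j * x (j + 2)) {r : R} (hr : 0 ≤ r)
    {j : ℕ} (hj : j ≤ m) : r ^ j * x j ≤ x 0 + r ^ m * x m := by
  have hnonneg (i : ℕ) : 0 ≤ r ^ i * x i := mul_nonneg (pow_nonneg hr i) (hx i)
  have hconvex (i : ℕ) (hi : i + 2 ≤ m) :
      2 * (r ^ (i + 1) * x (i + 1)) ≤ r ^ i * x i + r ^ (i + 2) * x (i + 2) := by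
    refine two_mul_le_add_of_sq_le_mul (hnonneg i) (hnonneg (i + 2)) ?_
    calc (r ^ (i + 1) * x (i + 1)) ^ 2 = (r ^ (i + 1)) ^ 2 * x (i + 1) ^ 2 := mul_pow _ _ _
      _ ≤ (r ^ (i + 1)) ^ 2 * (x i * x (i + 2)) := by gcongr; exact hlog i hi
      _ = r ^ i * x i * (r ^ (i + 2) * x (i + 2)) := by ring
  calc r ^ j * x j ≤ max (r ^ 0 * x 0) (r ^ m * x m) :=
        le_max_of_two_mul_le_add (x := fun i => r ^ i * x i) hconvex hj
    _ ≤ r ^ 0 * x 0 + r ^ m * x m := max_le_add_of_nonneg (hnonneg 0) (hnonneg m)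
    _ = x 0 + r ^ m * x m := by rw [pow_zero, one_mul]

theorem le_mul_add_inv_pow_mul_of_sq_le_mul (hx : ∀ j, 0 ≤ x j)
    (hlog : ∀ j, j + 2 ≤ m → x (j + 1) ^ 2 ≤ x j * x (j + 2)) {r : R} (hr : 0 < r) (hr1 : r ≤ 1)
    {j : ℕ} (hj : j < m) : x j ≤ r * x m + (r ^ m)⁻¹ * x 0 := by
  have hx0 := hx 0
  have hxm := hx m
  calc x j = (r ^ j)⁻¹ * (r ^ j * x j) := by field_simp
    _ ≤ (r ^ j)⁻¹ * (x 0 + r ^ m * x m) := by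
      gcongr
      exact pow_mul_le_add_of_sq_le_mul hx hlog hr.le hj.le
    _ = r ^ (m - j) * x m + (r ^ j)⁻¹ * x 0 := by
      rw [pow_sub₀ r hr.ne' hj.le]
      ring
    _ ≤ r * x m + (r ^ m)⁻¹ * x 0 := by
      gcongr ?_ * _ + ?_ * _
      · exact pow_le_of_le_one hr.le hr1 (by lia)
      · exact inv_anti₀ (by positivity) (pow_le_pow_of_le_one hr.le hr1 hj.le)

end Interpolation

section APrioriBounds

variable {X : Type*} [NormedAddCommGroup X] [InnerProductSpace ℂ X]
  {S : X →ₗ.[ℂ] X} {m : ℕ} {u : ℕ → X} {μ : ℂ}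

theorem abs_im_mul_norm_le_norm_sub_smul {f q : X} (h : (⟪f, q⟫_ℂ).im = 0) (μ : ℂ) :
    |μ.im| * ‖f‖ ≤ ‖q - μ • f‖ := by
  rcases eq_or_ne f 0 with rfl | hf
  · simp
  have him : (⟪f, q - μ • f⟫_ℂ).im = -(μ.im * ‖f‖ ^ 2) := by
    rw [inner_sub_right, inner_smul_right, inner_self_eq_norm_sq_to_K, Complex.sub_im, h]
    simp [← Complex.ofReal_pow]
  refine le_of_mul_le_mul_right ?_ (norm_pos_iff.2 hf)
  calc |μ.im| * ‖f‖ * ‖f‖ = |(⟪f, q - μ • f⟫_ℂ).im| := by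
        rw [him, abs_neg, abs_mul, abs_of_nonneg (sq_nonneg ‖f‖)]
        ring
    _ ≤ ‖⟪f, q - μ • f⟫_ℂ‖ := Complex.abs_im_le_norm _
    _ ≤ ‖f‖ * ‖q - μ • f‖ := norm_inner_le_norm _ _
    _ = ‖q - μ • f‖ * ‖f‖ := mul_comm _ _

theorem IsOrbit.norm_zero_le (hu : IsOrbit S m u) (hS : IsSymmP S) (hμ : μ.im ≠ 0) (b : ℕ → ℝ) :
    ‖u 0‖ ≤ |μ.im|⁻¹ * ‖∑ j ∈ Finset.range (m + 1), (b j : ℂ) • u j - μ • u 0‖ := by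
  rw [← div_eq_inv_mul, le_div_iff₀' (abs_pos.2 hμ)]
  exact abs_im_mul_norm_le_norm_sub_smul (hu.im_inner_sum_eq_zero hS b) μ

theorem IsOrbit.norm_lower_order_le (hu : IsOrbit S m u) (hS : IsSymmP S) (b : ℕ → ℝ)
    {r : ℝ} (hr : 0 < r) (hr1 : r ≤ 1) :
    ‖∑ j ∈ Finset.range m, (b j : ℂ) • u j‖ ≤
      (∑ j ∈ Finset.range m, |b j|) * (r * ‖u m‖ + (r ^ m)⁻¹ * ‖u 0‖) := by
  rw [Finset.sum_mul]
  refine norm_sum_le_of_le _ fun j hj => ?_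
  rw [norm_smul, Complex.norm_real, Real.norm_eq_abs]
  gcongr
  exact le_mul_add_inv_pow_mul_of_sq_le_mul (x := fun i => ‖u i‖) (fun _ => norm_nonneg _)
    (fun _ => hu.norm_sq_le hS) hr hr1 (Finset.mem_range.1 hj)

theorem IsSymmP.exists_norm_leading_le (hS : IsSymmP S) (m : ℕ) {c M : ℝ} (hc : 0 < c)
    (hM : 0 ≤ M) (hμ : μ.im ≠ 0) :
    ∃ K, 0 ≤ K ∧ ∀ b : ℕ → ℝ, c ≤ b m → ∑ j ∈ Finset.range m, |b j| ≤ M →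
      ∀ u, IsOrbit S m u →
        ‖u m‖ ≤ K * ‖∑ j ∈ Finset.range (m + 1), (b j : ℂ) • u j - μ • u 0‖ := by
  set r := c / (2 * (M + c)) with hr_def
  have hr : 0 < r := by positivity
  have hr1 : r ≤ 1 := (div_le_one (by positivity)).2 (by linarith)
  have hMr : M * r ≤ c / 2 := by
    rw [hr_def, ← mul_div_assoc, div_le_div_iff₀ (by positivity) two_pos]
    nlinarith
  refine ⟨2 / c * (1 + (M * (r ^ m)⁻¹ + ‖μ‖) * |μ.im|⁻¹), by positivity, fun b hb hbM u hu => ?_⟩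
  have hzero := hu.norm_zero_le hS hμ b
  have hlower := hu.norm_lower_order_le hS b hr hr1
  rw [Finset.sum_range_succ] at hzero ⊢
  set L := ∑ j ∈ Finset.range m, (b j : ℂ) • u j
  set y := ‖L + (b m : ℂ) • u m - μ • u 0‖
  have hleading : c * ‖u m‖ ≤ y + c / 2 * ‖u m‖ + (M * (r ^ m)⁻¹ + ‖μ‖) * ‖u 0‖ :=
    calc c * ‖u m‖ ≤ ‖(b m : ℂ) • u m‖ := by
          rw [norm_smul, Complex.norm_real]
          gcongr
          exact hb.trans (Real.le_norm_self _)
      _ = ‖(L + (b m : ℂ) • u m - μ • u 0) - L + μ • u 0‖ := by congr 1; abel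
      _ ≤ y + ‖L‖ + ‖μ‖ * ‖u 0‖ :=
        (norm_add_le _ _).trans (add_le_add (norm_sub_le _ _) (norm_smul_le _ _))
      _ ≤ y + M * (r * ‖u m‖ + (r ^ m)⁻¹ * ‖u 0‖) + ‖μ‖ * ‖u 0‖ := by
        gcongr
        exact hlower.trans (by gcongr)
      _ = y + M * r * ‖u m‖ + (M * (r ^ m)⁻¹ + ‖μ‖) * ‖u 0‖ := by ring
      _ ≤ y + c / 2 * ‖u m‖ + (M * (r ^ m)⁻¹ + ‖μ‖) * ‖u 0‖ := by gcongr
  calc ‖u m‖ = 2 / c * (c * ‖u m‖ - c / 2 * ‖u m‖) := by field_simp; ring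
    _ ≤ 2 / c * (y + (M * (r ^ m)⁻¹ + ‖μ‖) * ‖u 0‖) := by gcongr; linarith
    _ ≤ 2 / c * (y + (M * (r ^ m)⁻¹ + ‖μ‖) * (|μ.im|⁻¹ * y)) := by gcongr
    _ = 2 / c * (1 + (M * (r ^ m)⁻¹ + ‖μ‖) * |μ.im|⁻¹) * y := by ring

theorem exists_coeff_sum_smul_eq_segment (a : ℕ → ℝ) (m : ℕ) {t : ℝ} (ht : t ∈ Set.Icc 0 1) :
    ∃ b : ℕ → ℝ, min 1 (a m) ≤ b m ∧
      ∑ j ∈ Finset.range m, |b j| ≤ ∑ j ∈ Finset.range m, |a j| ∧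
      ∀ u : ℕ → X, ∑ j ∈ Finset.range (m + 1), (b j : ℂ) • u j =
        u m + (t : ℂ) • (∑ j ∈ Finset.range (m + 1), (a j : ℂ) • u j - u m) := by
  let b : ℕ → ℝ := fun j => if j = m then 1 + t * (a m - 1) else t * a j
  have hb_lt {j : ℕ} (hj : j ∈ Finset.range m) : b j = t * a j :=
    if_neg (Finset.mem_range.1 hj).ne
  have hbm : b m = 1 + t * (a m - 1) := if_pos rfl
  refine ⟨b, ?_, Finset.sum_le_sum fun j hj => ?_, fun u => ?_⟩
  · rw [hbm]
    nlinarith [min_le_left 1 (a m), min_le_right 1 (a m), ht.1, ht.2]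
  · rw [hb_lt hj, abs_mul, abs_of_nonneg ht.1]
    exact mul_le_of_le_one_left (abs_nonneg _) ht.2
  · have hlower : ∑ j ∈ Finset.range m, (b j : ℂ) • u j =
        (t : ℂ) • ∑ j ∈ Finset.range m, (a j : ℂ) • u j := by
      rw [Finset.smul_sum]
      exact Finset.sum_congr rfl fun j hj => by rw [hb_lt hj, Complex.ofReal_mul, mul_smul]
    rw [Finset.sum_range_succ, Finset.sum_range_succ, hlower, hbm]
    push_cast
    module

theorem IsSymmP.exists_norm_sum_sub_leading_le (hS : IsSymmP S) (m : ℕ) {a : ℕ → ℝ}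
    (ham : 0 < a m) (hμ : μ.im ≠ 0) :
    ∃ K, 0 ≤ K ∧ ∀ t ∈ Set.Icc (0 : ℝ) 1, ∀ u, IsOrbit S m u →
      ‖∑ j ∈ Finset.range (m + 1), (a j : ℂ) • u j - u m‖ ≤
        K * ‖u m - μ • u 0 +
          (t : ℂ) • (∑ j ∈ Finset.range (m + 1), (a j : ℂ) • u j - u m)‖ := by
  set M := ∑ j ∈ Finset.range m, |a j|
  have hM : 0 ≤ M := Finset.sum_nonneg fun _ _ => abs_nonneg _
  obtain ⟨K, hK, hleading⟩ :=
    hS.exists_norm_leading_le m (lt_min one_pos ham : 0 < min 1 (a m)) hM hμ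
  refine ⟨(M + |a m - 1|) * K + M * |μ.im|⁻¹, by positivity, fun t ht u hu => ?_⟩
  obtain ⟨b, hbm, hbM, hb⟩ := exists_coeff_sum_smul_eq_segment (X := X) a m ht
  rw [← add_sub_right_comm, ← hb]
  set y := ‖∑ j ∈ Finset.range (m + 1), (b j : ℂ) • u j - μ • u 0‖
  calc ‖∑ j ∈ Finset.range (m + 1), (a j : ℂ) • u j - u m‖
      = ‖∑ j ∈ Finset.range m, (a j : ℂ) • u j + ((a m - 1 : ℝ) : ℂ) • u m‖ := by
        rw [Finset.sum_range_succ]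
        push_cast
        congr 1
        module
    _ ≤ M * (1 * ‖u m‖ + (1 ^ m)⁻¹ * ‖u 0‖) + |a m - 1| * ‖u m‖ := by
        refine norm_add_le_of_le (hu.norm_lower_order_le hS a one_pos le_rfl) ?_
        rw [norm_smul, Complex.norm_real, Real.norm_eq_abs]
    _ = (M + |a m - 1|) * ‖u m‖ + M * ‖u 0‖ := by rw [one_pow]; ring
    _ ≤ (M + |a m - 1|) * (K * y) + M * (|μ.im|⁻¹ * y) := by
        gcongr
        · exact hleading b hbm hbM u hu
        · exact hu.norm_zero_le hS hμ b
    _ = ((M + |a m - 1|) * K + M * |μ.im|⁻¹) * y := by ring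

end APrioriBounds

section OrthogonalComplements

variable {𝕜 X : Type*} [RCLike 𝕜] [NormedAddCommGroup X] [InnerProductSpace 𝕜 X]

theorem isUnit_orthogonalProjectionOnto_comp {U V : Submodule 𝕜 X} [CompleteSpace U]
    [CompleteSpace V] {c : ℝ} (hc0 : 0 ≤ c) (hc : c < 1)
    (hU : ∀ x ∈ U, ‖x - V.starProjection x‖ ≤ c * ‖x‖) :
    IsUnit ((U.orthogonalProjectionOnto ∘L V.subtypeL) ∘L
      (V.orthogonalProjectionOnto ∘L U.subtypeL)) := by
  set T := (U.orthogonalProjectionOnto ∘L V.subtypeL) ∘L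
    (V.orthogonalProjectionOnto ∘L U.subtypeL)
  have hnorm : ‖1 - T‖ ≤ c := ContinuousLinearMap.opNorm_le_bound _ hc0 fun x => by
    have hx : (1 - T) x = U.orthogonalProjectionOnto (x - V.starProjection x) := by
      rw [map_sub, Submodule.orthogonalProjectionOnto_mem_subspace_eq_self]
      rfl
    rw [hx]
    exact (U.norm_orthogonalProjectionOnto_apply_le _).trans (hU x x.2)
  simpa using isUnit_one_sub_of_norm_lt_one (hnorm.trans_lt hc)

theorem nonempty_equiv_of_norm_sub_starProjection_le {U V : Submodule 𝕜 X} [CompleteSpace U]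
    [CompleteSpace V] {c : ℝ} (hc0 : 0 ≤ c) (hc : c < 1)
    (hU : ∀ x ∈ U, ‖x - V.starProjection x‖ ≤ c * ‖x‖)
    (hV : ∀ y ∈ V, ‖y - U.starProjection y‖ ≤ c * ‖y‖) : Nonempty (U ≃L[𝕜] V) := by
  let P : U →L[𝕜] V := V.orthogonalProjectionOnto ∘L U.subtypeL
  let Q : V →L[𝕜] U := U.orthogonalProjectionOnto ∘L V.subtypeL
  have hQP : Function.Bijective (Q ∘L P) := ContinuousLinearMap.isUnit_iff_bijective.1
    (isUnit_orthogonalProjectionOnto_comp hc0 hc hU)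
  have hPQ : Function.Bijective (P ∘L Q) := ContinuousLinearMap.isUnit_iff_bijective.1
    (isUnit_orthogonalProjectionOnto_comp hc0 hc hV)
  exact ⟨.ofBijective P (LinearMap.ker_eq_bot.2 (.of_comp (f := Q) hQP.injective))
    (LinearMap.range_eq_top.2 (.of_comp (g := Q) hPQ.surjective))⟩

variable {D : Type*} [AddCommGroup D] [Module 𝕜 D]

theorem norm_inner_le_of_mem_orthogonal_range {B B' : D →ₗ[𝕜] X} {c : ℝ}
    (hBB' : ∀ f, ‖B f - B' f‖ ≤ c * ‖B f‖) {x y : X} (hx : x ∈ (LinearMap.range B')ᗮ)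
    (hy : y ∈ (LinearMap.range B).topologicalClosure) : ‖⟪x, y⟫_𝕜‖ ≤ c * ‖x‖ * ‖y‖ := by
  have hclosed : IsClosed {y : X | ‖⟪x, y⟫_𝕜‖ ≤ c * ‖x‖ * ‖y‖} :=
    isClosed_le (by fun_prop) (by fun_prop)
  refine closure_minimal ?_ hclosed hy
  rintro _ ⟨f, rfl⟩
  have hB' : ⟪x, B' f⟫_𝕜 = 0 :=
    Submodule.inner_left_of_mem_orthogonal (LinearMap.mem_range_self B' f) hx
  calc ‖⟪x, B f⟫_𝕜‖ = ‖⟪x, B f - B' f⟫_𝕜‖ := by rw [inner_sub_right, hB', sub_zero]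
    _ ≤ ‖x‖ * ‖B f - B' f‖ := norm_inner_le_norm _ _
    _ ≤ ‖x‖ * (c * ‖B f‖) := by gcongr; exact hBB' f
    _ = c * ‖x‖ * ‖B f‖ := by ring

theorem norm_sub_starProjection_orthogonal_range_le [CompleteSpace X] {B B' : D →ₗ[𝕜] X} {c : ℝ}
    (hc0 : 0 ≤ c) (hBB' : ∀ f, ‖B f - B' f‖ ≤ c * ‖B f‖) {x : X}
    (hx : x ∈ (LinearMap.range B')ᗮ) :
    ‖x - (LinearMap.range B)ᗮ.starProjection x‖ ≤ c * ‖x‖ := by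
  set z := (LinearMap.range B)ᗮ.starProjection x
  have hz : z ∈ (LinearMap.range B)ᗮ := Submodule.starProjection_apply_mem _ x
  have hxz : x - z ∈ (LinearMap.range B)ᗮᗮ := Submodule.sub_starProjection_mem_orthogonal x
  have hinner : ⟪x, x - z⟫_𝕜 = ⟪x - z, x - z⟫_𝕜 := by
    rw [inner_sub_left x z, Submodule.inner_right_of_mem_orthogonal hz hxz, sub_zero]
  rw [Submodule.orthogonal_orthogonal_eq_closure] at hxz
  have hsq : ‖x - z‖ * ‖x - z‖ ≤ c * ‖x‖ * ‖x - z‖ :=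
    calc ‖x - z‖ * ‖x - z‖ = ‖⟪x, x - z⟫_𝕜‖ := by
          rw [hinner, inner_self_eq_norm_sq_to_K]
          simp [sq]
      _ ≤ c * ‖x‖ * ‖x - z‖ := norm_inner_le_of_mem_orthogonal_range hBB' hx hxz
  rcases (norm_nonneg (x - z)).eq_or_lt with h | h
  · rw [← h]
    positivity
  · exact le_of_mul_le_mul_right hsq h

theorem nonempty_equiv_orthogonal_range_of_segment [CompleteSpace X] {B₀ B₁ : D →ₗ[𝕜] X} {K : ℝ}
    (hK : 0 ≤ K) (hbound : ∀ t ∈ Set.Icc (0 : ℝ) 1, ∀ f,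
      ‖B₁ f - B₀ f‖ ≤ K * ‖B₀ f + (t : 𝕜) • (B₁ f - B₀ f)‖) :
    Nonempty ((LinearMap.range B₁)ᗮ ≃L[𝕜] (LinearMap.range B₀)ᗮ) := by
  let B : ℝ → D →ₗ[𝕜] X := fun t => B₀ + (t : 𝕜) • (B₁ - B₀)
  have hrel {s t : ℝ} (ht : t ∈ Set.Icc (0 : ℝ) 1) (f : D) :
      ‖B t f - B s f‖ ≤ |t - s| * K * ‖B t f‖ := by
    have hdiff : B t f - B s f = ((t - s : ℝ) : 𝕜) • (B₁ f - B₀ f) := by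
      simp only [B, LinearMap.add_apply, LinearMap.smul_apply, LinearMap.sub_apply]
      push_cast
      module
    rw [hdiff, norm_smul, RCLike.norm_ofReal, mul_assoc]
    gcongr
    exact hbound t ht f
  have hlocal {s t : ℝ} (hs : s ∈ Set.Icc (0 : ℝ) 1) (ht : t ∈ Set.Icc (0 : ℝ) 1)
      (hst : |t - s| * K < 1) :
      Nonempty ((LinearMap.range (B s))ᗮ ≃L[𝕜] (LinearMap.range (B t))ᗮ) :=
    nonempty_equiv_of_norm_sub_starProjection_le (by positivity) hst
      (fun x hx => norm_sub_starProjection_orthogonal_range_le (by positivity) (hrel ht) hx)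
      (fun x hx => norm_sub_starProjection_orthogonal_range_le (by positivity)
        (abs_sub_comm t s ▸ hrel hs) hx)
  have hnear (s : ℝ) : ∀ᶠ t in nhdsWithin s (Set.Icc (0 : ℝ) 1), |t - s| * K < 1 := by
    have hcont : Continuous fun t : ℝ => |t - s| * K := by fun_prop
    exact nhdsWithin_le_nhds (hcont.continuousAt.eventually_lt_const (by simp))
  have hall : Nonempty ((LinearMap.range (B 1))ᗮ ≃L[𝕜] (LinearMap.range (B 0))ᗮ) := by
    refine isPreconnected_Icc.induction₂' (s := Set.Icc (0 : ℝ) 1)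
      (fun s t => Nonempty ((LinearMap.range (B s))ᗮ ≃L[𝕜] (LinearMap.range (B t))ᗮ))
      (fun s hs => ?_) (fun _ _ _ _ _ _ ⟨e⟩ ⟨e'⟩ => ⟨e.trans e'⟩) (by simp) (by simp)
    filter_upwards [hnear s, self_mem_nhdsWithin] with t hst ht
    obtain ⟨e⟩ := hlocal hs ht hst
    exact ⟨⟨e⟩, ⟨e.symm⟩⟩
  have hB₁ : B 1 = B₁ := by simp [B]
  have hB₀ : B 0 = B₀ := by simp [B]
  rwa [hB₁, hB₀] at hall

end OrthogonalComplements

section Deficiency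

variable {X : Type*} [NormedAddCommGroup X] [InnerProductSpace ℂ X] [CompleteSpace X]

theorem map_subtype_kerAt_adjoint {A : X →ₗ.[ℂ] X} (hA : Dense (A.domain : Set X)) (μ : ℂ) :
    (kerAt A.adjoint μ).map A.adjoint.domain.subtype =
      (LinearMap.range (A.toFun - starRingEnd ℂ μ • A.domain.subtype))ᗮ := by
  have hinner (x : X) (f : A.domain) : ⟪x, (A.toFun - starRingEnd ℂ μ • A.domain.subtype) f⟫_ℂ =
      ⟪x, A f⟫_ℂ - ⟪μ • x, (f : X)⟫_ℂ := by
    rw [inner_smul_left, ← inner_smul_right, ← inner_sub_right]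
    rfl
  ext x
  simp only [Submodule.mem_orthogonal', LinearMap.mem_range, forall_exists_index,
    forall_apply_eq_imp_iff, hinner, sub_eq_zero]
  constructor
  · rintro ⟨y, hy, rfl⟩ f
    have hy : A.adjoint y = μ • (y : X) := sub_eq_zero.1 hy
    rw [Submodule.subtype_apply, ← hy]
    exact (LinearPMap.adjoint_isFormalAdjoint hA y f).symm
  · intro hx
    have hdom : x ∈ A.adjoint.domain :=
      LinearPMap.mem_adjoint_domain_of_exists x ⟨μ • x, fun f => (hx f).symm⟩
    exact ⟨⟨x, hdom⟩,
      sub_eq_zero.2 (LinearPMap.adjoint_apply_eq hA ⟨x, hdom⟩ fun f => (hx f).symm), rfl⟩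

/-- The deficiency space `ker (A* - μ)`, a submodule of `dom A*`, viewed as the orthogonal
complement of the range of `A - μ̄`. -/
def kerAtAdjointEquiv {A : X →ₗ.[ℂ] X} (hA : Dense (A.domain : Set X)) (μ : ℂ) :
    kerAt A.adjoint μ ≃ₗᵢ[ℂ]
      (LinearMap.range (A.toFun - starRingEnd ℂ μ • A.domain.subtype))ᗮ where
  toLinearEquiv := Submodule.equivMapOfInjective _ (Submodule.injective_subtype _) _ ≪≫ₗ
    LinearEquiv.ofEq _ _ (map_subtype_kerAt_adjoint hA μ)
  norm_map' _ := rfl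

end Deficiency

/-- A topological isomorphism, and not only an equality of `Module.rank`: the rank is the algebraic
dimension, which differs from the Hilbert-space dimension for infinite-dimensional spaces. -/
theorem polynomial_deficiency_indices_general {S : H →ₗ.[ℂ] H} (hsym : IsSymmP S) {m : ℕ}
    (hdm : Dense ((pmapPow S m).domain : Set H)) {a : ℕ → ℝ} (ham : 0 < a m)
    {A : H →ₗ.[ℂ] H} (hdom : A.domain = (pmapPow S m).domain)
    (hval : ∀ (f : H) (hf : f ∈ A.domain) (g : ℕ → H),
      (∀ (j : ℕ) (hfj : f ∈ (pmapPow S j).domain), g j = pmapPow S j ⟨f, hfj⟩) →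
      A ⟨f, hf⟩ = ∑ j ∈ Finset.range (m + 1), (a j : ℂ) • g j) {μ : ℂ} (hμ : μ.im ≠ 0) :
    Nonempty (kerAt A.adjoint μ ≃L[ℂ] kerAt (pmapPow S m).adjoint μ) := by
  obtain ⟨D, B⟩ := A
  obtain rfl : D = (pmapPow S m).domain := hdom
  have hB (f : (pmapPow S m).domain) :
      B f = ∑ j ∈ Finset.range (m + 1), (a j : ℂ) • powOrbit S f j :=
    hval f f.2 (powOrbit S f) fun _ => powOrbit_of_mem
  have hpow (f : (pmapPow S m).domain) : (pmapPow S m).toFun f = powOrbit S f m :=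
    (powOrbit_of_mem f.2).symm
  obtain ⟨K, hK, hbound⟩ :=
    hsym.exists_norm_sum_sub_leading_le m ham (μ := starRingEnd ℂ μ) (by simpa using hμ)
  obtain ⟨e⟩ := nonempty_equiv_orthogonal_range_of_segment (𝕜 := ℂ)
    (B₀ := (pmapPow S m).toFun - starRingEnd ℂ μ • (pmapPow S m).domain.subtype)
    (B₁ := B - starRingEnd ℂ μ • (pmapPow S m).domain.subtype) hK fun t ht f => by
      simpa [hB, hpow, powOrbit_zero] using hbound t ht _ (isOrbit_powOrbit f.2)
  exact ⟨(kerAtAdjointEquiv (A := ⟨_, B⟩) hdm μ).toContinuousLinearEquiv.trans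
    (e.trans (kerAtAdjointEquiv hdm μ).symm.toContinuousLinearEquiv)⟩

/-- For a densely defined, closed, symmetric `S` with `S^m` densely defined, and a real
polynomial `P(t) = a_m t^m + ⋯ + a_0` with `a_m > 0`, the operator `P(S)` defined on
`dom(S^m)` by `P(S) f = ∑_{j=0}^m a_j S^j f` has the same deficiency indices as `S^m`. -/
theorem polynomial_deficiency_indices (S : H →ₗ.[ℂ] H)
    (hd : Dense (S.domain : Set H)) (hc : S.IsClosed) (hsym : IsSymmP S)
    (m : ℕ) (hm : 1 ≤ m)
    (hdm : Dense (((pmapPow S m).domain : Submodule ℂ H) : Set H))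
    (a : ℕ → ℝ) (ham : 0 < a m)
    (A : H →ₗ.[ℂ] H) (hdom : A.domain = (pmapPow S m).domain)
    (hval : ∀ (f : H) (hf : f ∈ A.domain) (g : ℕ → H),
      (∀ (j : ℕ) (hfj : f ∈ (pmapPow S j).domain), g j = pmapPow S j ⟨f, hfj⟩) →
      A ⟨f, hf⟩ = ∑ j ∈ Finset.range (m + 1), (a j : ℂ) • g j) :
    nPlus A = nPlus (pmapPow S m) ∧ nMinus A = nMinus (pmapPow S m) := by
  have hequiv {μ : ℂ} (hμ : μ.im ≠ 0) :
      Nonempty (kerAt A.adjoint μ ≃L[ℂ] kerAt (pmapPow S m).adjoint μ) :=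
    polynomial_deficiency_indices_general hsym hdm ham hdom hval hμ
  exact ⟨(hequiv (by simp)).elim fun e => e.toLinearEquiv.rank_eq,
    (hequiv (by simp)).elim fun e => e.toLinearEquiv.rank_eq⟩
end
end

section
/- Let T : dom(T) ⊆ H₁ → H₂ be a densely defined, closed operator between complex Hilbert spaces. Then ran(T) is closed in H₂ if and only if there exists c > 0 such that ‖Tf‖ ≥ c‖f‖ for all f ∈ dom(T) that are orthogonal to ker(T) (i.e., for all f ∈ dom(T) ∩ (ker T)^⊥). -/
open scoped InnerProductSpace
open Cardinal

noncomputable section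

variable {E F G H : Type*}
  [NormedAddCommGroup E] [InnerProductSpace ℂ E] [CompleteSpace E]
  [NormedAddCommGroup F] [InnerProductSpace ℂ F] [CompleteSpace F]
  [NormedAddCommGroup G] [InnerProductSpace ℂ G] [CompleteSpace G]
  [NormedAddCommGroup H] [InnerProductSpace ℂ H] [CompleteSpace H]

/-!
A closed complement `S` of `ker T` carries the whole range: `T` and its restriction to `S` have the
same range, and the restriction is closed and injective. For an injective closed operator the graph
is a Banach space on which the second projection is bounded and injective, with range `ran T`. By
the open mapping theorem this range is closed iff the projection is bounded below on the graph,
which is the same as `T` being bounded below. In a Hilbert space take `S = (ker T)ᗮ`.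
-/

section DomRestrict

variable {R X Y : Type*} [Ring R] [AddCommGroup X] [Module R X] [AddCommGroup Y] [Module R Y]

theorem graph_domRestrict (T : X →ₗ.[R] Y) (S : Submodule R X) :
    (T.domRestrict S).graph = T.graph ⊓ S.comap (LinearMap.fst R X Y) := by
  ext ⟨x, y⟩
  simp only [LinearPMap.mem_graph_iff, Submodule.mem_inf, Submodule.mem_comap, LinearMap.fst_apply]
  constructor
  · rintro ⟨f, rfl, rfl⟩
    exact ⟨⟨⟨f, f.2.2⟩, rfl, rfl⟩, f.2.1⟩
  · rintro ⟨⟨f, rfl, rfl⟩, hf⟩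
    exact ⟨⟨f, hf, f.2⟩, rfl, rfl⟩

theorem ker_domRestrict_eq_bot {T : X →ₗ.[R] Y} {S : Submodule R X}
    (h : Disjoint ((LinearMap.ker T.toFun).map T.domain.subtype) S) :
    LinearMap.ker (T.domRestrict S).toFun = ⊥ := by
  refine LinearMap.ker_eq_bot'.2 fun f hf => Subtype.ext ?_
  exact Submodule.disjoint_def.1 h f ⟨⟨f, f.2.2⟩, hf, rfl⟩ f.2.1

theorem range_domRestrict {T : X →ₗ.[R] Y} {S : Submodule R X}
    (h : Codisjoint ((LinearMap.ker T.toFun).map T.domain.subtype) S) :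
    LinearMap.range (T.domRestrict S).toFun = LinearMap.range T.toFun := by
  apply le_antisymm
  · rintro _ ⟨f, rfl⟩
    exact ⟨⟨f, f.2.2⟩, rfl⟩
  · rintro _ ⟨f, rfl⟩
    obtain ⟨_, s, ⟨k, hk, rfl⟩, hs, hks⟩ := Submodule.codisjoint_iff_exists_add_eq.1 h f
    have hfk : ((f - k : T.domain) : X) = s := sub_eq_of_eq_add' hks.symm
    refine ⟨⟨s, hs, hfk ▸ (f - k).2⟩, ?_⟩
    calc T.domRestrict S ⟨s, hs, hfk ▸ (f - k).2⟩ = T (f - k) :=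
          LinearPMap.domRestrict_apply hfk.symm
      _ = T f - T k := T.map_sub f k
      _ = T f := by rw [show T k = 0 from hk, sub_zero]

end DomRestrict

section Closed

variable {R X Y : Type*} [CommRing R] [TopologicalSpace X] [AddCommGroup X] [Module R X]
  [TopologicalSpace Y] [AddCommGroup Y] [Module R Y]

theorem isClosed_domRestrict {T : X →ₗ.[R] Y} {S : Submodule R X} (hT : T.IsClosed)
    (hS : IsClosed (S : Set X)) : (T.domRestrict S).IsClosed := by
  rw [LinearPMap.IsClosed, graph_domRestrict]
  exact hT.inter (hS.preimage continuous_fst)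

theorem isClosed_map_subtype_ker {T : X →ₗ.[R] Y} (hT : T.IsClosed) :
    IsClosed ((LinearMap.ker T.toFun).map T.domain.subtype : Set X) := by
  have hker : ((LinearMap.ker T.toFun).map T.domain.subtype : Set X) =
      (fun x => (x, (0 : Y))) ⁻¹' T.graph := by
    ext x
    simp [LinearPMap.mem_graph_iff, and_comm]
  rw [hker]
  exact IsClosed.preimage (by fun_prop) hT

end Closed

section GraphSnd

variable {R X Y : Type*} [Ring R] [TopologicalSpace X] [AddCommGroup X] [Module R X]
  [TopologicalSpace Y] [AddCommGroup Y] [Module R Y]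

/-- The second projection `(f, T f) ↦ T f` on the graph of `T`. It turns `T` into an everywhere
defined continuous operator with the same range; for normed `X` and `Y` the graph
carries the sup norm of `X × Y`. -/
def graphSnd (T : X →ₗ.[R] Y) : T.graph →L[R] Y :=
  (ContinuousLinearMap.snd R X Y).comp T.graph.subtypeL

theorem range_graphSnd (T : X →ₗ.[R] Y) : Set.range (graphSnd T) = LinearMap.range T.toFun := by
  ext y
  constructor
  · rintro ⟨⟨z, hz⟩, rfl⟩
    obtain ⟨f, -, hf⟩ := T.mem_graph_iff.1 hz
    exact ⟨f, hf⟩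
  · rintro ⟨f, rfl⟩
    exact ⟨⟨_, T.mem_graph f⟩, rfl⟩

theorem injective_graphSnd {T : X →ₗ.[R] Y} (hT : LinearMap.ker T.toFun = ⊥) :
    Function.Injective (graphSnd T) := by
  rintro ⟨⟨_, _⟩, hz⟩ ⟨⟨_, _⟩, hw⟩ hzw
  obtain ⟨f, rfl, rfl⟩ := T.mem_graph_iff.1 hz
  obtain ⟨g, rfl, rfl⟩ := T.mem_graph_iff.1 hw
  obtain rfl : f = g := LinearMap.ker_eq_bot.1 hT hzw
  rfl

end GraphSnd

theorem exists_mul_norm_le_norm_graphSnd_iff {R X Y : Type*} [Ring R] [SeminormedAddCommGroup X]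
    [Module R X] [SeminormedAddCommGroup Y] [Module R Y] (T : X →ₗ.[R] Y) :
    (∃ c > 0, ∀ z, c * ‖z‖ ≤ ‖graphSnd T z‖) ↔ ∃ c > 0, ∀ f : T.domain, c * ‖(f : X)‖ ≤ ‖T f‖ := by
  constructor
  · rintro ⟨c, hc, hbound⟩
    refine ⟨c, hc, fun f => ?_⟩
    calc c * ‖(f : X)‖ ≤ c * ‖((f : X), T f)‖ := by gcongr; exact norm_fst_le ((f : X), T f)
      _ ≤ ‖T f‖ := hbound ⟨_, T.mem_graph f⟩
  · rintro ⟨c, hc, hbound⟩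
    refine ⟨min c 1, by positivity, ?_⟩
    rintro ⟨⟨_, _⟩, hz⟩
    obtain ⟨f, rfl, rfl⟩ := T.mem_graph_iff.1 hz
    change min c 1 * max ‖(f : X)‖ ‖T f‖ ≤ ‖T f‖
    rw [mul_max_of_nonneg _ _ (by positivity)]
    refine max_le ?_ (mul_le_of_le_one_left (norm_nonneg _) (min_le_right c 1))
    exact (mul_le_mul_of_nonneg_right (min_le_left c 1) (norm_nonneg _)).trans (hbound f)

section Banach

variable {𝕜 X Y : Type*} [NontriviallyNormedField 𝕜] [NormedAddCommGroup X] [NormedSpace 𝕜 X]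
  [CompleteSpace X] [NormedAddCommGroup Y] [NormedSpace 𝕜 Y] [CompleteSpace Y]

theorem isClosed_range_iff_of_ker_eq_bot {T : X →ₗ.[𝕜] Y} (hT : T.IsClosed)
    (hker : LinearMap.ker T.toFun = ⊥) :
    IsClosed (LinearMap.range T.toFun : Set Y) ↔
      ∃ c > 0, ∀ f : T.domain, c * ‖(f : X)‖ ≤ ‖T f‖ := by
  have : CompleteSpace T.graph := IsClosed.completeSpace_coe (hs := hT)
  rw [← range_graphSnd,
    (graphSnd T).isClosed_range_iff_antilipschitz_of_injective (injective_graphSnd hker),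
    antilipschitzWith_iff_exists_mul_le_norm, exists_mul_norm_le_norm_graphSnd_iff]

theorem closed_range_iff_bounded_below_general {T : X →ₗ.[𝕜] Y} (hT : T.IsClosed)
    {S : Submodule 𝕜 X} (hS : IsClosed (S : Set X))
    (hker : IsCompl ((LinearMap.ker T.toFun).map T.domain.subtype) S) :
    IsClosed (LinearMap.range T.toFun : Set Y) ↔
      ∃ c : ℝ, 0 < c ∧ ∀ f : T.domain, (f : X) ∈ S → c * ‖(f : X)‖ ≤ ‖T f‖ := by
  rw [← range_domRestrict hker.codisjoint,
    isClosed_range_iff_of_ker_eq_bot (isClosed_domRestrict hT hS)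
      (ker_domRestrict_eq_bot hker.disjoint)]
  refine exists_congr fun c => and_congr_right fun _ => ?_
  exact ⟨fun hbound f hf => hbound ⟨f, hf, f.2⟩, fun hbound f => hbound ⟨f, f.2.2⟩ f.2.1⟩

end Banach

theorem isCompl_map_subtype_ker_orthogonal {𝕜 X Y : Type*} [RCLike 𝕜] [NormedAddCommGroup X]
    [InnerProductSpace 𝕜 X] [CompleteSpace X] [TopologicalSpace Y] [AddCommGroup Y] [Module 𝕜 Y]
    {T : X →ₗ.[𝕜] Y} (hT : T.IsClosed) :
    IsCompl ((LinearMap.ker T.toFun).map T.domain.subtype)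
      ((LinearMap.ker T.toFun).map T.domain.subtype)ᗮ := by
  have := (isClosed_map_subtype_ker hT).completeSpace_coe
  exact Submodule.isCompl_orthogonal _

/-- A densely defined closed operator between complex Hilbert spaces has closed range
if and only if there is `c > 0` with `‖T f‖ ≥ c ‖f‖` for all `f ∈ dom T` orthogonal
to `ker T`. -/
theorem closed_range_iff_bounded_below (T : E →ₗ.[ℂ] F)
    (hd : Dense (T.domain : Set E)) (hc : T.IsClosed) :
    IsClosed ((LinearMap.range T.toFun : Submodule ℂ F) : Set F) ↔
    ∃ c : ℝ, 0 < c ∧ ∀ f : T.domain,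
      (f : E) ∈ ((LinearMap.ker T.toFun).map T.domain.subtype)ᗮ →
      c * ‖(f : E)‖ ≤ ‖T f‖ :=
  closed_range_iff_bounded_below_general hc (Submodule.isClosed_orthogonal _)
    (isCompl_map_subtype_ker_orthogonal hc)
end
end

section
/- Let T : dom(T) ⊆ H₁ → H₂ be a densely defined, closed operator between complex Hilbert spaces. Then T is Fredholm (i.e., ran(T) is closed and dim ker(T) and dim ker(T*) are both finite) if and only if both self-adjoint nonnegative operators T*T (in H₁) and TT* (in H₂) are Fredholm (i.e., ran(T*T) is closed and dim ker(T*T) is finite, and ran(TT*) is closed and dim ker(TT*) is finite). -/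
open scoped InnerProductSpace
open Cardinal

noncomputable section

variable {E F G H : Type*}
  [NormedAddCommGroup E] [InnerProductSpace ℂ E] [CompleteSpace E]
  [NormedAddCommGroup F] [InnerProductSpace ℂ F] [CompleteSpace F]
  [NormedAddCommGroup G] [InnerProductSpace ℂ G] [CompleteSpace G]
  [NormedAddCommGroup H] [InnerProductSpace ℂ H] [CompleteSpace H]

/-!
The product `TT*` has the same range as `T` as soon as `ran T* + ker T` is everything, and the same
kernel as `T*` as soon as `ran T* ∩ ker T = 0`; likewise for `T*T`. Since `ran T* ⊆ (ker T)ᗮ` and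
`ker T* = (ran T)ᗮ`, the intersections vanish. If `ran T` is closed, then the open mapping theorem
and Riesz representation give `ran T* = (ker T)ᗮ`, so both sums are everything.
Conversely, every `b` is of the form `TT*u + u` (project `(0, b)` onto the graph of `T`), and if
`b ⟂ ran TT*`, then `0 = ⟪b, TT*u⟫ = ‖TT*u‖² + ‖T*u‖²`, so that `b = u ∈ ker T* = (ran T)ᗮ`. Hence
`ran T` lies in the closure of `ran TT*`, and the two coincide when the latter is closed.
-/

section QuotientMap

variable {R M M₂ M₃ : Type*} [Ring R]
  [AddCommGroup M] [Module R M] [TopologicalSpace M]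
  [AddCommGroup M₂] [Module R M₂] [TopologicalSpace M₂]
  [AddCommGroup M₃] [Module R M₃] [TopologicalSpace M₃]

lemma exists_clm_comp_eq_of_ker_le_ker {A : M →L[R] M₂} {φ : M →L[R] M₃}
    (hA : Topology.IsQuotientMap A) (h : A.ker ≤ φ.ker) : ∃ ψ : M₂ →L[R] M₃, ψ ∘L A = φ := by
  let e := A.toLinearMap.quotKerEquivOfSurjective hA.surjective
  let ψ : M₂ →ₗ[R] M₃ := A.ker.liftQ φ.toLinearMap h ∘ₗ e.symm.toLinearMap
  have hψ : ∀ x, ψ (A x) = φ x := fun x => by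
    have he : e.symm (A x) = A.ker.mkQ x := e.symm_apply_eq.2 rfl
    simp [ψ, he]
  have hcont : Continuous ψ := hA.continuous_iff.2 (φ.continuous.congr fun x => (hψ x).symm)
  exact ⟨⟨ψ, hcont⟩, ContinuousLinearMap.ext hψ⟩

end QuotientMap

section Kernel

variable {R M M₂ : Type*} [Ring R] [AddCommGroup M] [Module R M] [AddCommGroup M₂] [Module R M₂]

/-- The kernel of a partially defined operator as a submodule of the ambient space, rather than of
the domain, so that kernels of operators with different domains can be compared. -/
def pker (T : M →ₗ.[R] M₂) : Submodule R M :=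
  (LinearMap.ker T.toFun).map T.domain.subtype

lemma mem_pker_iff {T : M →ₗ.[R] M₂} {x : M} : x ∈ pker T ↔ (x, 0) ∈ T.graph := by
  simp [pker, T.toFun_eq_coe]

lemma rank_pker (T : M →ₗ.[R] M₂) :
    Module.rank R (pker T) = Module.rank R (LinearMap.ker T.toFun) :=
  rank_map_eq T.domain.injective_subtype _

lemma mem_range_iff_exists_mem_graph {T : M →ₗ.[R] M₂} {y : M₂} :
    y ∈ LinearMap.range T.toFun ↔ ∃ x, (x, y) ∈ T.graph :=
  LinearPMap.mem_range_iff

end Kernel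

lemma isClosed_pker {R M M₂ : Type*} [CommRing R]
    [AddCommGroup M] [Module R M] [TopologicalSpace M]
    [AddCommGroup M₂] [Module R M₂] [TopologicalSpace M₂] {T : M →ₗ.[R] M₂}
    (hT : T.IsClosed) : IsClosed (pker T : Set M) := by
  have h : (pker T : Set M) = (fun x => (x, (0 : M₂))) ⁻¹' T.graph :=
    Set.ext fun _ => mem_pker_iff
  rw [h]
  exact IsClosed.preimage (by fun_prop) hT

section Product

variable {X Y Z : Type*}
  [NormedAddCommGroup X] [InnerProductSpace ℂ X]
  [NormedAddCommGroup Y] [InnerProductSpace ℂ Y]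
  [NormedAddCommGroup Z] [InnerProductSpace ℂ Z]
  {S : Y →ₗ.[ℂ] Z} {T : X →ₗ.[ℂ] Y}

lemma pcomp_apply (f : T.domain) (hf : T f ∈ S.domain) :
    pcomp S T ⟨f, Submodule.mem_map_of_mem hf⟩ = S ⟨T f, hf⟩ := by
  have hsymm : (Submodule.equivMapOfInjective T.domain.subtype T.domain.injective_subtype
      (S.domain.comap T.toFun)).symm ⟨f, Submodule.mem_map_of_mem hf⟩ = ⟨f, hf⟩ :=
    (LinearEquiv.symm_apply_eq _).2 rfl
  exact congrArg (fun g : S.domain.comap T.toFun => S ⟨T g, g.2⟩) hsymm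

lemma mem_graph_pcomp_iff {x : X} {z : Z} :
    (x, z) ∈ (pcomp S T).graph ↔ ∃ y, (x, y) ∈ T.graph ∧ (y, z) ∈ S.graph := by
  constructor
  · intro h
    obtain ⟨⟨_, hx⟩, rfl, rfl⟩ := (LinearPMap.mem_graph_iff _).1 h
    obtain ⟨f, hf, rfl⟩ := Submodule.mem_map.1 hx
    exact ⟨T f, T.mem_graph f, (pcomp_apply f hf).symm ▸ S.mem_graph ⟨T f, hf⟩⟩
  · rintro ⟨y, hxy, hyz⟩
    obtain ⟨f, rfl, rfl⟩ := (LinearPMap.mem_graph_iff _).1 hxy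
    obtain ⟨⟨_, hf⟩, rfl, hz⟩ := (LinearPMap.mem_graph_iff _).1 hyz
    exact (LinearPMap.mem_graph_iff _).2 ⟨_, rfl, (pcomp_apply f hf).trans hz⟩

lemma range_pcomp_le (S : Y →ₗ.[ℂ] Z) (T : X →ₗ.[ℂ] Y) :
    LinearMap.range (pcomp S T).toFun ≤ LinearMap.range S.toFun := by
  intro z hz
  obtain ⟨x, hx⟩ := mem_range_iff_exists_mem_graph.1 hz
  obtain ⟨y, -, hyz⟩ := mem_graph_pcomp_iff.1 hx
  exact mem_range_iff_exists_mem_graph.2 ⟨y, hyz⟩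

lemma range_pcomp_of_codisjoint (h : Codisjoint (LinearMap.range T.toFun) (pker S)) :
    LinearMap.range (pcomp S T).toFun = LinearMap.range S.toFun := by
  refine le_antisymm (range_pcomp_le S T) fun z hz => ?_
  obtain ⟨y, hyz⟩ := mem_range_iff_exists_mem_graph.1 hz
  obtain ⟨y', k, hy', hk, rfl⟩ := Submodule.codisjoint_iff_exists_add_eq.1 h y
  obtain ⟨x, hxy⟩ := mem_range_iff_exists_mem_graph.1 hy'
  have hy'z : (y', z) ∈ S.graph := by simpa using sub_mem hyz (mem_pker_iff.1 hk)
  exact mem_range_iff_exists_mem_graph.2 ⟨x, mem_graph_pcomp_iff.2 ⟨y', hxy, hy'z⟩⟩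

lemma pker_pcomp_of_disjoint (h : Disjoint (LinearMap.range T.toFun) (pker S)) :
    pker (pcomp S T) = pker T := by
  ext x
  rw [mem_pker_iff, mem_pker_iff, mem_graph_pcomp_iff]
  constructor
  · rintro ⟨y, hxy, hy⟩
    obtain rfl : y = 0 := Submodule.disjoint_def.1 h y
      (mem_range_iff_exists_mem_graph.2 ⟨x, hxy⟩) (mem_pker_iff.2 hy)
    exact hxy
  · exact fun hx => ⟨0, hx, S.graph.zero_mem⟩

lemma rank_ker_pcomp_of_disjoint (h : Disjoint (LinearMap.range T.toFun) (pker S)) :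
    Module.rank ℂ (LinearMap.ker (pcomp S T).toFun) = Module.rank ℂ (LinearMap.ker T.toFun) := by
  rw [← rank_pker, pker_pcomp_of_disjoint h, rank_pker]

end Product

open scoped LinearPMap

section Adjoint

variable {𝕜 X Y : Type*} [RCLike 𝕜]
  [NormedAddCommGroup X] [InnerProductSpace 𝕜 X] [CompleteSpace X]
  [NormedAddCommGroup Y] [InnerProductSpace 𝕜 Y]
  {T : X →ₗ.[𝕜] Y}

lemma mem_graph_adjoint_iff (hd : Dense (T.domain : Set X)) {u : Y} {v : X} :
    (u, v) ∈ T†.graph ↔ ∀ x y, (x, y) ∈ T.graph → ⟪u, y⟫_𝕜 = ⟪v, x⟫_𝕜 := by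
  rw [LinearPMap.adjoint_graph_eq_graph_adjoint hd, Submodule.mem_adjoint_iff]
  refine forall₃_congr fun x y _ => ?_
  rw [sub_eq_zero, ← inner_conj_symm, ← inner_conj_symm x, (starRingEnd 𝕜).injective.eq_iff]

lemma pker_adjoint (hd : Dense (T.domain : Set X)) : pker T† = (LinearMap.range T.toFun)ᗮ := by
  ext u
  simp only [mem_pker_iff, mem_graph_adjoint_iff hd, Submodule.mem_orthogonal',
    mem_range_iff_exists_mem_graph, inner_zero_left, forall_exists_index]
  exact forall_comm

lemma disjoint_range_pker_adjoint (hd : Dense (T.domain : Set X)) :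
    Disjoint (LinearMap.range T.toFun) (pker T†) := by
  rw [pker_adjoint hd]
  exact Submodule.orthogonal_disjoint _

lemma range_adjoint_le_orthogonal_pker (hd : Dense (T.domain : Set X)) :
    LinearMap.range T†.toFun ≤ (pker T)ᗮ := by
  intro v hv
  obtain ⟨u, huv⟩ := mem_range_iff_exists_mem_graph.1 hv
  refine (Submodule.mem_orthogonal' _ _).2 fun x hx => ?_
  simpa using ((mem_graph_adjoint_iff hd).1 huv x 0 (mem_pker_iff.1 hx)).symm

lemma disjoint_range_adjoint_pker (hd : Dense (T.domain : Set X)) :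
    Disjoint (LinearMap.range T†.toFun) (pker T) :=
  (Submodule.orthogonal_disjoint _).symm.mono_left (range_adjoint_le_orthogonal_pker hd)

variable [CompleteSpace Y]

lemma exists_inner_eq_of_mem_orthogonal_pker (hc : T.IsClosed)
    (hr : IsClosed (LinearMap.range T.toFun : Set Y)) {v : X} (hv : v ∈ (pker T)ᗮ) :
    ∃ u : Y, ∀ x y, (x, y) ∈ T.graph → ⟪u, y⟫_𝕜 = ⟪v, x⟫_𝕜 := by
  have : CompleteSpace T.graph := hc.completeSpace_coe
  have : CompleteSpace (LinearMap.range T.toFun) := hr.completeSpace_coe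
  let A : T.graph →L[𝕜] LinearMap.range T.toFun :=
    (ContinuousLinearMap.snd 𝕜 X Y ∘L T.graph.subtypeL).codRestrict _
      fun p => mem_range_iff_exists_mem_graph.2 ⟨p.1.1, p.2⟩
  have hA : Function.Surjective A := by
    rintro ⟨y, hy⟩
    obtain ⟨x, hxy⟩ := mem_range_iff_exists_mem_graph.1 hy
    exact ⟨⟨(x, y), hxy⟩, rfl⟩
  let φ : T.graph →L[𝕜] 𝕜 := innerSL 𝕜 v ∘L ContinuousLinearMap.fst 𝕜 X Y ∘L T.graph.subtypeL
  have hker : A.ker ≤ φ.ker := by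
    rintro ⟨⟨x, y⟩, hxy⟩ hp
    obtain rfl : y = 0 := congrArg Subtype.val hp
    exact (Submodule.mem_orthogonal' _ _).1 hv x (mem_pker_iff.2 hxy)
  obtain ⟨ψ, hψ⟩ := exists_clm_comp_eq_of_ker_le_ker (A.isQuotientMap hA) hker
  let u := (InnerProductSpace.toDual 𝕜 (LinearMap.range T.toFun)).symm ψ
  refine ⟨u, fun x y hxy => ?_⟩
  calc ⟪(u : Y), y⟫_𝕜 = ψ (A ⟨(x, y), hxy⟩) :=
      InnerProductSpace.toDual_symm_apply (x := A ⟨(x, y), hxy⟩) (y := ψ)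
    _ = ⟪v, x⟫_𝕜 := congrArg (fun χ : T.graph →L[𝕜] 𝕜 => χ ⟨(x, y), hxy⟩) hψ

lemma range_adjoint_of_isClosed_range (hd : Dense (T.domain : Set X)) (hc : T.IsClosed)
    (hr : IsClosed (LinearMap.range T.toFun : Set Y)) :
    LinearMap.range T†.toFun = (pker T)ᗮ := by
  refine le_antisymm (range_adjoint_le_orthogonal_pker hd) fun v hv => ?_
  obtain ⟨u, hu⟩ := exists_inner_eq_of_mem_orthogonal_pker hc hr hv
  exact mem_range_iff_exists_mem_graph.2 ⟨u, (mem_graph_adjoint_iff hd).2 hu⟩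

lemma codisjoint_range_pker_adjoint (hd : Dense (T.domain : Set X))
    (hr : IsClosed (LinearMap.range T.toFun : Set Y)) :
    Codisjoint (LinearMap.range T.toFun) (pker T†) := by
  have : CompleteSpace (LinearMap.range T.toFun) := hr.completeSpace_coe
  rw [pker_adjoint hd]
  exact (Submodule.isCompl_orthogonal _).codisjoint

lemma codisjoint_range_adjoint_pker (hd : Dense (T.domain : Set X)) (hc : T.IsClosed)
    (hr : IsClosed (LinearMap.range T.toFun : Set Y)) :
    Codisjoint (LinearMap.range T†.toFun) (pker T) := by
  have : CompleteSpace (pker T) := (isClosed_pker hc).completeSpace_coe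
  rw [range_adjoint_of_isClosed_range hd hc hr]
  exact (Submodule.isCompl_orthogonal _).codisjoint.symm

lemma exists_mem_graph_mem_graph_adjoint_add_eq (hd : Dense (T.domain : Set X)) (hc : T.IsClosed)
    (a : X) (b : Y) :
    ∃ x y u v, (x, y) ∈ T.graph ∧ (u, v) ∈ T†.graph ∧ x - v = a ∧ y + u = b := by
  let K : Submodule 𝕜 (WithLp 2 (X × Y)) :=
    T.graph.comap (WithLp.linearEquiv 2 𝕜 (X × Y)).toLinearMap
  have hK : IsClosed (K : Set (WithLp 2 (X × Y))) :=
    IsClosed.preimage (WithLp.prod_continuous_ofLp 2 X Y) hc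
  have : CompleteSpace K := hK.completeSpace_coe
  obtain ⟨p, hp, q, hq, hpq⟩ := K.exists_add_mem_mem_orthogonal (WithLp.toLp 2 (a, b))
  have hq' : (q.snd, -q.fst) ∈ T†.graph := by
    refine (mem_graph_adjoint_iff hd).2 fun x y hxy => ?_
    have horth : ⟪q.fst, x⟫_𝕜 + ⟪q.snd, y⟫_𝕜 = 0 :=
      (Submodule.mem_orthogonal' K q).1 hq (WithLp.toLp 2 (x, y)) hxy
    rw [inner_neg_left]
    exact eq_neg_of_add_eq_zero_right horth
  refine ⟨p.fst, p.snd, q.snd, -q.fst, hp, hq', ?_, (congrArg WithLp.snd hpq).symm⟩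
  rw [sub_neg_eq_add]
  exact (congrArg WithLp.fst hpq).symm

end Adjoint

section ProductWithAdjoint

variable {X Y : Type*}
  [NormedAddCommGroup X] [InnerProductSpace ℂ X] [CompleteSpace X]
  [NormedAddCommGroup Y] [InnerProductSpace ℂ Y] [CompleteSpace Y]
  {T : X →ₗ.[ℂ] Y}

lemma orthogonal_range_pcomp_adjoint_le_pker (hd : Dense (T.domain : Set X)) (hc : T.IsClosed) :
    (LinearMap.range (pcomp T T†).toFun)ᗮ ≤ pker T† := by
  intro b hb
  obtain ⟨x, y, u, v, hxy, huv, hxv, rfl⟩ := exists_mem_graph_mem_graph_adjoint_add_eq hd hc 0 b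
  obtain rfl : x = v := sub_eq_zero.1 hxv
  have hy : y ∈ LinearMap.range (pcomp T T†).toFun :=
    mem_range_iff_exists_mem_graph.2 ⟨u, mem_graph_pcomp_iff.2 ⟨x, huv, hxy⟩⟩
  have hsum : ⟪y, y⟫_ℂ + ⟪x, x⟫_ℂ = 0 := by
    rw [← (mem_graph_adjoint_iff hd).1 huv x y hxy, ← inner_add_left]
    exact (Submodule.mem_orthogonal' _ _).1 hb y hy
  have hnorm : ‖y‖ ^ 2 + ‖x‖ ^ 2 = 0 := by
    simpa only [map_add, inner_self_eq_norm_sq, map_zero] using congrArg RCLike.re hsum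
  obtain ⟨rfl, rfl⟩ : y = 0 ∧ x = 0 := by
    simpa using (add_eq_zero_iff_of_nonneg (sq_nonneg _) (sq_nonneg _)).1 hnorm
  rw [zero_add]
  exact mem_pker_iff.2 huv

lemma range_pcomp_adjoint_of_isClosed (hd : Dense (T.domain : Set X)) (hc : T.IsClosed)
    (h : IsClosed (LinearMap.range (pcomp T T†).toFun : Set Y)) :
    LinearMap.range (pcomp T T†).toFun = LinearMap.range T.toFun := by
  have : CompleteSpace (LinearMap.range (pcomp T T†).toFun) := h.completeSpace_coe
  refine le_antisymm (range_pcomp_le T T†) ?_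
  calc LinearMap.range T.toFun ≤ (LinearMap.range T.toFun)ᗮᗮ := Submodule.le_orthogonal_orthogonal _
    _ = (pker T†)ᗮ := by rw [pker_adjoint hd]
    _ ≤ (LinearMap.range (pcomp T T†).toFun)ᗮᗮ :=
      Submodule.orthogonal_le (orthogonal_range_pcomp_adjoint_le_pker hd hc)
    _ = LinearMap.range (pcomp T T†).toFun := Submodule.orthogonal_orthogonal _

lemma isClosed_range_pcomp_adjoint_iff (hd : Dense (T.domain : Set X)) (hc : T.IsClosed) :
    IsClosed (LinearMap.range (pcomp T T†).toFun : Set Y) ↔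
      IsClosed (LinearMap.range T.toFun : Set Y) := by
  constructor <;> intro h
  · rwa [← range_pcomp_adjoint_of_isClosed hd hc h]
  · rwa [range_pcomp_of_codisjoint (codisjoint_range_adjoint_pker hd hc h)]

lemma isClosed_range_adjoint_pcomp (hd : Dense (T.domain : Set X)) (hc : T.IsClosed)
    (hr : IsClosed (LinearMap.range T.toFun : Set Y)) :
    IsClosed (LinearMap.range (pcomp T† T).toFun : Set X) := by
  rw [range_pcomp_of_codisjoint (codisjoint_range_pker_adjoint hd hr),
    range_adjoint_of_isClosed_range hd hc hr]
  exact Submodule.isClosed_orthogonal _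

end ProductWithAdjoint

/-- A densely defined closed `T` is Fredholm (closed range, finite-dimensional kernel
and cokernel) if and only if both `T*T` and `TT*` are Fredholm (closed range and
finite-dimensional kernel). -/
theorem fredholm_iff_TstarT_TTstar (T : E →ₗ.[ℂ] F)
    (hd : Dense (T.domain : Set E)) (hc : T.IsClosed) :
    (IsClosed ((LinearMap.range T.toFun : Submodule ℂ F) : Set F) ∧
      Module.rank ℂ (LinearMap.ker T.toFun) < ℵ₀ ∧
      Module.rank ℂ (LinearMap.ker T.adjoint.toFun) < ℵ₀) ↔
    (IsClosed ((LinearMap.range (pcomp T.adjoint T).toFun : Submodule ℂ E) : Set E) ∧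
      Module.rank ℂ (LinearMap.ker (pcomp T.adjoint T).toFun) < ℵ₀ ∧
      IsClosed ((LinearMap.range (pcomp T T.adjoint).toFun : Submodule ℂ F) : Set F) ∧
      Module.rank ℂ (LinearMap.ker (pcomp T T.adjoint).toFun) < ℵ₀) := by
  rw [rank_ker_pcomp_of_disjoint (disjoint_range_pker_adjoint hd),
    rank_ker_pcomp_of_disjoint (disjoint_range_adjoint_pker hd),
    isClosed_range_pcomp_adjoint_iff hd hc]
  constructor
  · rintro ⟨hr, hker, hker_adjoint⟩
    exact ⟨isClosed_range_adjoint_pcomp hd hc hr, hker, hr, hker_adjoint⟩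
  · rintro ⟨-, hker, hr, hker_adjoint⟩
    exact ⟨hr, hker, hker_adjoint⟩
end
end
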